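/- arXiv:1810.13069 — 9 statements merged into one kernel-verified Lean document; each statement's English description precedes it below -/
import Mathlib

section
/- Let d be a positive integer divisible by 4, let K ≥ 1 be an integer, and let 0 < ε < 1/(d√d). Let W and Ũ be subsets of {1,…,d} with |W| = |Ũ| = d/4, and set δ = d/4 − |Ũ ∩ W|, a = (d/4)·ε/√d and b = |Ũ ∩ W|·ε/√d. Then K·e^a/(1 + K·e^a) − K·e^b/(1 + K·e^b) ≥ δ·ε/(4e²·K·√d). (This is Lemma 3 of the paper, the revenue-gap lemma in the regret lower bound construction, with the explicit constant 1/(4e²) in place of the paper's 1/4, which is what its proof yields.) -/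
/-- revenue-gap lemma in the regret lower bound construction
(Lemma 3 of the paper, with the explicit constant 1/(4e²)). -/
theorem stmt1 (d K : ℕ) (hd : 0 < d) (hd4 : 4 ∣ d) (hK : 1 ≤ K)
    (ε : ℝ) (hε0 : 0 < ε) (hε1 : ε < 1 / (d * Real.sqrt d))
    (W U : Finset (Fin d)) (hW : W.card = d / 4) (hU : U.card = d / 4)
    (δ : ℕ) (hδ : δ = d / 4 - (U ∩ W).card)
    (a b : ℝ) (ha : a = ((d / 4 : ℕ) : ℝ) * ε / Real.sqrt d)
    (hb : b = ((U ∩ W).card : ℝ) * ε / Real.sqrt d) :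
    (δ : ℝ) * ε / (4 * Real.exp 1 ^ 2 * K * Real.sqrt d) ≤
      K * Real.exp a / (1 + K * Real.exp a) - K * Real.exp b / (1 + K * Real.exp b) := by
  have hd1 : (1:ℝ) ≤ d := by exact_mod_cast hd
  have hs1 : 1 ≤ Real.sqrt d := Real.one_le_sqrt.mpr hd1
  have hK1 : (1:ℝ) ≤ K := by exact_mod_cast hK
  have hs0 : 0 < Real.sqrt d := by linarith
  have hc : (U ∩ W).card ≤ d / 4 := hU ▸ Finset.card_le_card Finset.inter_subset_left
  have hδ' : (δ : ℝ) = ((d / 4 : ℕ) : ℝ) - ((U ∩ W).card : ℝ) := by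
    rw [hδ, Nat.cast_sub hc]
  have hab : (δ : ℝ) * ε / Real.sqrt d = a - b := by
    rw [ha, hb, hδ']; ring
  have hb0 : 0 ≤ b := by rw [hb]; positivity
  have ht0 : 0 ≤ a - b := by rw [← hab]; positivity
  have ha1 : a ≤ 1 := by
    rw [lt_div_iff₀ (by positivity)] at hε1
    rw [ha, div_le_one hs0]
    have h1 : ((d / 4 : ℕ) : ℝ) ≤ d := by exact_mod_cast Nat.div_le_self d 4
    have h2 : ((d / 4 : ℕ) : ℝ) * ε ≤ d * ε := by gcongr
    have h3 : d * ε * 1 ≤ d * ε * Real.sqrt d := by gcongr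
    nlinarith
  have hexp : a - b ≤ Real.exp a - Real.exp b := by
    have h1 := Real.add_one_le_exp (a - b)
    have h2 := Real.one_le_exp hb0
    have h3 : Real.exp a = Real.exp (a - b) * Real.exp b := by
      rw [← Real.exp_add]; congr 1; ring
    rw [h3]
    nlinarith
  have hE : 1 ≤ Real.exp 1 := Real.one_le_exp (by norm_num)
  have hKE : 1 ≤ K * Real.exp 1 := by nlinarith
  have key : ∀ x : ℝ, x ≤ 1 → 1 + K * Real.exp x ≤ 2 * (K * Real.exp 1) := by
    intro x hx
    have : K * Real.exp x ≤ K * Real.exp 1 := by gcongr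
    linarith
  have hA := key a ha1
  have hB := key b (by linarith)
  have hA0 : 0 < 1 + K * Real.exp a := by positivity
  have hB0 : 0 < 1 + K * Real.exp b := by positivity
  have e1 : K * Real.exp a / (1 + K * Real.exp a) - K * Real.exp b / (1 + K * Real.exp b)
      = K * (Real.exp a - Real.exp b) / ((1 + K * Real.exp a) * (1 + K * Real.exp b)) := by
    field_simp
    ring
  have e2 : (δ : ℝ) * ε / (4 * Real.exp 1 ^ 2 * K * Real.sqrt d)
      = K * (a - b) / ((2 * (K * Real.exp 1)) * (2 * (K * Real.exp 1))) := by
    rw [← hab]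
    have hK0 : (K:ℝ) ≠ 0 := by linarith
    field_simp
    ring
  rw [e1, e2]
  have hn : 0 ≤ K * (Real.exp a - Real.exp b) := mul_nonneg (by linarith) (by linarith)
  gcongr
end

section
/- Let d ≥ 1 and T₀ < T be integers. Let I_{T₀} be a real symmetric positive definite d×d matrix, let M_t for t = T₀+1, …, T be real symmetric positive semidefinite d×d matrices, and define I_t = I_{t−1} + M_t for t = T₀+1, …, T. Then Σ_{t=T₀+1}^{T} min{1, ‖I_{t−1}^{−1/2} M_t I_{t−1}^{−1/2}‖_op²} ≤ 4·log( det(I_T) / det(I_{T₀}) ). (Elliptical potential lemma; first inequality of Lemma 6 of the paper.) -/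
/-- The ℓ₂→ℓ₂ operator (spectral) norm of a real square matrix. -/
noncomputable def l2OpNorm {d : ℕ} (M : Matrix (Fin d) (Fin d) ℝ) : ℝ :=
  ‖Matrix.toEuclideanCLM (𝕜 := ℝ) M‖

open scoped Matrix.Norms.L2Operator in
theorem aux_norm {d : ℕ} (A : Matrix (Fin d) (Fin d) ℝ) (hA : A.PosSemidef) :
    1 + l2OpNorm A ≤ (1 + A).det := by
  have hsp := hA.1.spectral_theorem
  have hnn := hA.eigenvalues_nonneg
  set U := hA.1.eigenvectorUnitary with hU
  set D : Matrix (Fin d) (Fin d) ℝ := Matrix.diagonal hA.1.eigenvalues with hD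
  have hA2 : A = (U : Matrix (Fin d) (Fin d) ℝ) * D * star (U : Matrix (Fin d) (Fin d) ℝ) := by
    rw [Unitary.conjStarAlgAut_apply] at hsp
    exact hsp
  have hUU : (U : Matrix (Fin d) (Fin d) ℝ) * star (U : Matrix (Fin d) (Fin d) ℝ) = 1 :=
    Unitary.coe_mul_star_self U
  have hdet : (1 + A).det = ∏ i, (1 + hA.1.eigenvalues i) := by
    have h1 : 1 + A = (U : Matrix (Fin d) (Fin d) ℝ) * (1 + D)
        * star (U : Matrix (Fin d) (Fin d) ℝ) := by
      rw [mul_add, add_mul, mul_one, hUU, ← hA2]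
    have h2 : 1 + D = Matrix.diagonal (fun i => 1 + hA.1.eigenvalues i) := by
      rw [hD, ← Matrix.diagonal_one, Matrix.diagonal_add]
    have h3 := congrArg Matrix.det hUU
    rw [Matrix.det_mul, Matrix.det_one] at h3
    rw [h1, Matrix.det_mul, Matrix.det_mul, mul_right_comm, h3, one_mul, h2, Matrix.det_diagonal]
  have hnorm : l2OpNorm A = ‖hA.1.eigenvalues‖ := by
    have : l2OpNorm A = ‖A‖ := rfl
    rw [this]
    conv_lhs => rw [hA2]
    rw [← Unitary.coe_star, CStarRing.norm_mul_coe_unitary, CStarRing.norm_coe_unitary_mul, hD,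
      Matrix.l2_opNorm_diagonal]
  have hprod : ∀ s : Finset (Fin d), 1 ≤ ∏ i ∈ s, (1 + hA.1.eigenvalues i) := by
    intro s
    have h := Finset.prod_le_prod (s := s) (f := fun _ => (1 : ℝ))
      (g := fun i => 1 + hA.1.eigenvalues i) (fun _ _ => zero_le_one)
      (fun j _ => by have := hnn j; linarith)
    rwa [Finset.prod_const_one] at h
  have hone := hprod Finset.univ
  have key : ‖hA.1.eigenvalues‖ ≤ ∏ i, (1 + hA.1.eigenvalues i) - 1 := by
    refine (pi_norm_le_iff_of_nonneg (by linarith)).2 fun i => ?_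
    rw [Real.norm_of_nonneg (hnn i), ← Finset.mul_prod_erase _ _ (Finset.mem_univ i)]
    have h4 := hprod (Finset.univ.erase i)
    have := hnn i
    nlinarith
  rw [hnorm, hdet]; linarith

theorem aux_log (x y : ℝ) (hx : 0 ≤ x) (hy : 1 + x ≤ y) : min 1 (x ^ 2) ≤ 4 * Real.log y := by
  have h1 : Real.log (1 + x) ≤ Real.log y := Real.log_le_log (by linarith) hy
  have h2 := Real.one_sub_inv_le_log_of_pos (show 0 < 1 + x by linarith)
  have h3 : 1 - (1 + x)⁻¹ = x / (1 + x) := by field_simp; ring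
  have h4 : min 1 (x ^ 2) ≤ 4 * (x / (1 + x)) := by
    rw [← mul_div_assoc, le_div_iff₀ (by linarith)]
    rcases le_total x 1 with h | h
    · have := min_le_right 1 (x ^ 2)
      nlinarith [mul_nonneg hx hx, mul_nonneg hx (sub_nonneg.2 h)]
    · have := min_le_left 1 (x ^ 2)
      nlinarith
  linarith

/-- elliptical potential lemma (first inequality of Lemma 6 of the paper).
Here `B t` plays the role of `I_t^{-1/2}`: it is characterized as the unique positive
definite matrix with `B t * B t * I t = 1`, i.e. `(B t)² = (I t)⁻¹`. -/
theorem stmt2 (d T₀ T : ℕ) (hd : 1 ≤ d) (hT : T₀ < T)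
    (I M B : ℕ → Matrix (Fin d) (Fin d) ℝ)
    (hI0 : (I T₀).PosDef)
    (hM : ∀ t, T₀ < t → t ≤ T → (M t).PosSemidef)
    (hrec : ∀ t, T₀ < t → t ≤ T → I t = I (t - 1) + M t)
    (hB : ∀ t, T₀ ≤ t → t < T → (B t).PosDef ∧ B t * B t * I t = 1) :
    ∑ t ∈ Finset.Icc (T₀ + 1) T,
        min 1 (l2OpNorm (B (t - 1) * M t * B (t - 1)) ^ 2)
      ≤ 4 * Real.log ((I T).det / (I T₀).det) := by
  have main : ∀ n, T₀ ≤ n → n ≤ T → 0 < (I n).det ∧ ∑ t ∈ Finset.Icc (T₀ + 1) n,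
        min 1 (l2OpNorm (B (t - 1) * M t * B (t - 1)) ^ 2)
      ≤ 4 * Real.log ((I n).det / (I T₀).det) := by
    intro n hn
    induction n, hn using Nat.le_induction with
    | base =>
      intro _
      refine ⟨hI0.det_pos, ?_⟩
      rw [div_self hI0.det_pos.ne']
      simp
    | succ n hn ih =>
      intro hnT
      obtain ⟨hpos, hsum⟩ := ih (by omega)
      obtain ⟨hBp, hBI⟩ := hB n hn (by omega)
      have hMn := hM (n + 1) (by omega) hnT
      have hr := hrec (n + 1) (by omega) hnT
      rw [Nat.add_sub_cancel] at hr
      have hA : (B n * M (n + 1) * B n).PosSemidef := by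
        have := hMn.mul_mul_conjTranspose_same (B n)
        rwa [hBp.1.eq] at this
      have hle := aux_norm _ hA
      have hBIB : B n * I n * B n = 1 := by
        rw [mul_eq_one_comm, ← mul_assoc, hBI]
      have hd1 : (1 + B n * M (n + 1) * B n).det = (I (n + 1)).det / (I n).det := by
        have h1 : 1 + B n * M (n + 1) * B n = B n * I (n + 1) * B n := by
          rw [hr, mul_add, add_mul, hBIB]
        have h2 := congrArg Matrix.det hBI
        rw [Matrix.det_mul, Matrix.det_mul, Matrix.det_one] at h2
        rw [h1, Matrix.det_mul, Matrix.det_mul, eq_div_iff hpos.ne']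
        linear_combination (I (n + 1)).det * h2
      have hnn : 0 ≤ l2OpNorm (B n * M (n + 1) * B n) := norm_nonneg _
      rw [hd1] at hle
      have hq : 0 < (I (n + 1)).det / (I n).det := by linarith
      have hpos' : 0 < (I (n + 1)).det := by
        have := mul_pos hq hpos
        rwa [div_mul_cancel₀ _ hpos.ne'] at this
      refine ⟨hpos', ?_⟩
      rw [Finset.sum_Icc_succ_top (by omega), Nat.add_sub_cancel]
      have hl := aux_log _ _ hnn hle
      have h0 := hI0.det_pos
      rw [Real.log_div hpos'.ne' hpos.ne'] at hl
      rw [Real.log_div hpos.ne' h0.ne'] at hsum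
      rw [Real.log_div hpos'.ne' h0.ne']
      linarith
  exact (main T hT.le le_rfl).2
end

section
/- Let p and q be probability vectors on a finite index set (p_j, q_j ≥ 0 with Σ_j p_j = Σ_j q_j = 1), with p_j > 0 and q_j > 0 for all j, and let M = max_j |q_j − p_j| / p_j. Then Σ_j p_j · log(p_j / q_j) ≥ (1 / (2(1+M)²)) · Σ_j (q_j − p_j)² / p_j. (Kullback–Leibler vs. chi-square lower bound; the key estimate in the proof of Lemma S-MV of the paper.) -/
theorem aux_log_s4 (x L : ℝ) (hx : 0 < x) (hL : 1 ≤ L) (hxL : x ≤ L) :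
    (1 / (2 * L ^ 2)) * (x - 1) ^ 2 ≤ x - 1 - Real.log x := by
  rcases le_total 1 x with h | h
  · have h1 : Real.log x ≤ Real.sinh (Real.log x) :=
      Real.self_le_sinh_iff.2 (Real.log_nonneg h)
    rw [Real.sinh_log hx] at h1
    have h2 : (1 / (2 * L ^ 2)) * (x - 1) ^ 2 ≤ (1 / (2 * x)) * (x - 1) ^ 2 := by
      apply mul_le_mul_of_nonneg_right _ (sq_nonneg _)
      apply one_div_le_one_div_of_le (by positivity)
      nlinarith
    have h3 : (1 / (2 * x)) * (x - 1) ^ 2 = x - 1 - (x - x⁻¹) / 2 := by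
      field_simp
      ring
    linarith
  · have h0 : |1 - x| < 1 := by rw [abs_lt]; constructor <;> linarith
    have hs := Real.hasSum_pow_div_log_of_abs_lt_one h0
    have h1 := sum_le_hasSum (Finset.range 2) (fun i _ => by
      have : 0 ≤ 1 - x := by linarith
      positivity) hs
    simp only [Finset.sum_range_succ, Finset.sum_range_zero] at h1
    norm_num at h1
    have h2 : (1 / (2 * L ^ 2)) * (x - 1) ^ 2 ≤ (1 / 2) * (x - 1) ^ 2 := by
      apply mul_le_mul_of_nonneg_right _ (sq_nonneg _)
      apply one_div_le_one_div_of_le (by positivity)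
      nlinarith
    nlinarith

/-- Kullback–Leibler vs. chi-square lower bound (key estimate in the
proof of Lemma S-MV of the paper). -/
theorem stmt4 {ι : Type*} [Fintype ι] [Nonempty ι]
    (p q : ι → ℝ) (hp : ∀ j, 0 < p j) (hq : ∀ j, 0 < q j)
    (hp1 : ∑ j, p j = 1) (hq1 : ∑ j, q j = 1)
    (M : ℝ) (hM : M = Finset.univ.sup' Finset.univ_nonempty (fun j => |q j - p j| / p j)) :
    (1 / (2 * (1 + M) ^ 2)) * ∑ j, (q j - p j) ^ 2 / p j
      ≤ ∑ j, p j * Real.log (p j / q j) := by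
  have hMj : ∀ j, |q j - p j| / p j ≤ M := fun j => by
    rw [hM]
    exact Finset.le_sup' (fun j => |q j - p j| / p j) (Finset.mem_univ j)
  have key : ∀ j, (1 / (2 * (1 + M) ^ 2)) * ((q j - p j) ^ 2 / p j)
      ≤ (q j - p j) + p j * Real.log (p j / q j) := fun j => by
    have hpj := hp j
    have h0 : 0 ≤ |q j - p j| / p j := by positivity
    have h1 : q j / p j ≤ 1 + M := by
      have h2 : (q j - p j) / p j ≤ |q j - p j| / p j := by
        gcongr
        exact le_abs_self _
      rw [sub_div, div_self hpj.ne'] at h2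
      linarith [hMj j]
    have h3 := aux_log_s4 (q j / p j) (1 + M) (div_pos (hq j) hpj) (by linarith [hMj j]) h1
    have h4 := mul_le_mul_of_nonneg_left h3 hpj.le
    have h5 : Real.log (p j / q j) = - Real.log (q j / p j) := by
      rw [← Real.log_inv, inv_div]
    have h6 : p j * (1 / (2 * (1 + M) ^ 2) * (q j / p j - 1) ^ 2)
        = (1 / (2 * (1 + M) ^ 2)) * ((q j - p j) ^ 2 / p j) := by
      have : p j * (q j / p j - 1) ^ 2 = (q j - p j) ^ 2 / p j := by
        field_simp
      rw [← this]; ring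
    have h7 : p j * (q j / p j) = q j := by field_simp
    rw [h6] at h4
    rw [h5]
    linarith
  have := Finset.sum_le_sum (fun j (_ : j ∈ Finset.univ) => key j)
  rw [← Finset.mul_sum, Finset.sum_add_distrib, Finset.sum_sub_distrib, hp1, hq1] at this
  linarith
end

section
/- Let p and q be probability vectors on a finite index set (p_j, q_j ≥ 0 with Σ_j p_j = Σ_j q_j = 1), with p_j > 0 and |q_j − p_j| ≤ p_j/2 for all j. Then (i) |log(q_j / p_j)| ≤ 1 for every j, and (ii) Σ_j p_j · log²(q_j / p_j) ≤ 8 · Σ_j p_j · log(p_j / q_j). (This is the content of Lemma S-MV of the paper — the bounds M ≤ 1 and V² ≤ 8|F_t(θ)| on the martingale increments — stated with the proximity hypothesis its proof requires.) -/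
/-- bounds on the log-likelihood ratio (Lemma S-MV of the paper):
(i) `|log(q_j/p_j)| ≤ 1` and (ii) the second moment of the log-likelihood ratio is at
most `8` times the Kullback–Leibler divergence. -/
theorem stmt6 {ι : Type*} [Fintype ι]
    (p q : ι → ℝ) (hp : ∀ j, 0 < p j) (hq : ∀ j, 0 ≤ q j)
    (hp1 : ∑ j, p j = 1) (hq1 : ∑ j, q j = 1)
    (hclose : ∀ j, |q j - p j| ≤ p j / 2) :
    (∀ j, |Real.log (q j / p j)| ≤ 1) ∧
      ∑ j, p j * (Real.log (q j / p j)) ^ 2 ≤ 8 * ∑ j, p j * Real.log (p j / q j) := by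
  have hr : ∀ j, 1 / 2 ≤ q j / p j ∧ q j / p j ≤ 3 / 2 := by
    intro j
    have h := abs_le.mp (hclose j)
    rw [le_div_iff₀ (hp j), div_le_iff₀ (hp j)]
    constructor <;> linarith [h.1, h.2]
  have hL : ∀ j, |Real.log (q j / p j)| ≤ 1 := by
    intro j
    obtain ⟨h1, h2⟩ := hr j
    have h0 : 0 < q j / p j := by linarith
    have ha := Real.log_le_sub_one_of_pos h0
    have hb := Real.one_sub_inv_le_log_of_pos h0
    have hc : (q j / p j)⁻¹ ≤ 2 := by
      rw [inv_le_comm₀ h0 (by norm_num)]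
      linarith
    rw [abs_le]
    constructor <;> linarith
  refine ⟨hL, ?_⟩
  have key : ∀ j, p j * (Real.log (q j / p j)) ^ 2
      ≤ 8 * (p j * Real.log (p j / q j)) + 8 * (q j - p j) := by
    intro j
    have h0 : 0 < q j / p j := by linarith [(hr j).1]
    have hinv : Real.log (p j / q j) = - Real.log (q j / p j) := by
      rw [← Real.log_inv, inv_div]
    have hqe : q j = p j * Real.exp (Real.log (q j / p j)) := by
      rw [Real.exp_log h0, mul_div_cancel₀ _ (hp j).ne']
    have hl := (abs_le.mp (hL j)).1
    rw [hinv]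
    generalize Real.log (q j / p j) = L at *
    have h1 := Real.add_one_le_exp (L / 2)
    have h2 : Real.exp L = Real.exp (L / 2) ^ 2 := by
      rw [← Real.exp_nat_mul]
      congr 1
      push_cast
      ring
    have h3 : L ^ 2 ≤ 8 * (Real.exp L - 1 - L) := by
      rw [h2]
      nlinarith [sq_nonneg L]
    have h4 := mul_le_mul_of_nonneg_left h3 (hp j).le
    rw [hqe]
    linarith
  have hs := Finset.sum_le_sum (fun j (_ : j ∈ Finset.univ) => key j)
  rw [Finset.sum_add_distrib, ← Finset.mul_sum, ← Finset.mul_sum, Finset.sum_sub_distrib,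
    hp1, hq1] at hs
  linarith
end

section
/- Let K ≥ 1 be an integer and let S be a nonempty finite set of at most K items, where item j has utility û_j ≥ 0 and revenue r_j ∈ [0,1]. Let U = max{1, max_{j∈S} û_j}, fix ε₀ ∈ (0, 1/2], and set Δ = ε₀·U/K. For each j ∈ S let μ_j = round(û_j/Δ)·Δ and γ_j = round(û_j r_j/Δ)·Δ, where round(x) denotes a nearest integer to x. Then | (Σ_{j∈S} γ_j)/(1 + Σ_{j∈S} μ_j) − (Σ_{j∈S} û_j r_j)/(1 + Σ_{j∈S} û_j) | ≤ 6·ε₀. (Discretization error bound for the expected-revenue term; first part of Lemma 8 of the paper.) -/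
/-- discretization error bound for the expected-revenue term
(first part of Lemma 8 of the paper). -/
theorem stmt7 {ι : Type*} (K : ℕ) (hK : 1 ≤ K)
    (S : Finset ι) (hS : S.Nonempty) (hSK : S.card ≤ K)
    (u r : ι → ℝ) (hu : ∀ j ∈ S, 0 ≤ u j) (hr : ∀ j ∈ S, r j ∈ Set.Icc (0 : ℝ) 1)
    (ε₀ : ℝ) (hε₀ : ε₀ ∈ Set.Ioc (0 : ℝ) (1 / 2))
    (U Δ : ℝ) (hU : U = max 1 (S.sup' hS u)) (hΔ : Δ = ε₀ * U / K)
    (μ γ : ι → ℝ)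
    (hμ : ∀ j ∈ S, μ j = (round (u j / Δ) : ℝ) * Δ)
    (hγ : ∀ j ∈ S, γ j = (round (u j * r j / Δ) : ℝ) * Δ) :
    |(∑ j ∈ S, γ j) / (1 + ∑ j ∈ S, μ j)
        - (∑ j ∈ S, u j * r j) / (1 + ∑ j ∈ S, u j)| ≤ 6 * ε₀ := by
  obtain ⟨he0, he1⟩ := hε₀
  have hKpos : (0 : ℝ) < K := by exact_mod_cast hK
  have hU1 : 1 ≤ U := hU ▸ le_max_left _ _
  have hΔpos : 0 < Δ := by rw [hΔ]; positivity
  have key : ∀ x : ℝ, |(round (x / Δ) : ℝ) * Δ - x| ≤ Δ / 2 := by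
    intro x
    have h := abs_sub_round (x / Δ)
    have h2 : (round (x / Δ) : ℝ) * Δ - x = -((x / Δ - round (x / Δ)) * Δ) := by
      field_simp
      ring
    rw [h2, abs_neg, abs_mul, abs_of_pos hΔpos]
    nlinarith
  have hcard : (S.card : ℝ) * (Δ / 2) ≤ ε₀ * U / 2 := by
    have h1 : (S.card : ℝ) ≤ K := by exact_mod_cast hSK
    have h2 : (K : ℝ) * Δ = ε₀ * U := by rw [hΔ]; field_simp
    nlinarith
  have sumkey : ∀ f g : ι → ℝ, (∀ j ∈ S, g j = (round (f j / Δ) : ℝ) * Δ) →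
      |∑ j ∈ S, g j - ∑ j ∈ S, f j| ≤ ε₀ * U / 2 := by
    intro f g h
    rw [← Finset.sum_sub_distrib]
    refine (Finset.abs_sum_le_sum_abs _ _).trans ?_
    refine (Finset.sum_le_card_nsmul S _ (Δ / 2) ?_).trans ?_
    · intro j hj
      rw [h j hj]
      exact key _
    · rw [nsmul_eq_mul]
      exact hcard
  have hA := sumkey (fun j => u j * r j) γ hγ
  have hB := sumkey u μ hμ
  have hsum0 : 0 ≤ ∑ j ∈ S, u j := Finset.sum_nonneg hu
  have hUB : U ≤ 1 + ∑ j ∈ S, u j := by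
    rw [hU]
    refine max_le (by linarith) ?_
    refine Finset.sup'_le _ _ fun j hj => ?_
    have := Finset.single_le_sum hu hj
    linarith
  have hA0 : 0 ≤ ∑ j ∈ S, u j * r j :=
    Finset.sum_nonneg fun j hj => mul_nonneg (hu j hj) (hr j hj).1
  have hAB : ∑ j ∈ S, u j * r j ≤ ∑ j ∈ S, u j :=
    Finset.sum_le_sum fun j hj => mul_le_of_le_one_right (hu j hj) (hr j hj).2
  generalize ∑ j ∈ S, u j * r j = A at *
  generalize ∑ j ∈ S, u j = B at *
  generalize ∑ j ∈ S, γ j = A' at *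
  generalize ∑ j ∈ S, μ j = B' at *
  rw [abs_le] at hA hB
  have heU : ε₀ * U ≤ U / 2 := by nlinarith
  have hB' : U / 2 ≤ 1 + B' := by linarith [hB.1]
  have hBp : 0 < 1 + B := by linarith
  have hBp' : 0 < 1 + B' := by linarith
  have hq0 : 0 ≤ A / (1 + B) := by positivity
  have hq1 : A / (1 + B) ≤ 1 := by rw [div_le_one hBp]; linarith
  have hq : A = A / (1 + B) * (1 + B) := by field_simp
  generalize A / (1 + B) = q at *
  have heU0 : 0 < ε₀ * U := by positivity
  have e : A' / (1 + B') - q = ((A' - A) - q * (B' - B)) / (1 + B') := by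
    rw [hq]; field_simp; ring
  rw [e, abs_div, abs_of_pos hBp', div_le_iff₀ hBp']
  have h3 : |q * (B' - B)| ≤ ε₀ * U / 2 := by
    rw [abs_mul, abs_of_nonneg hq0]
    have := abs_le.2 hB
    nlinarith [abs_nonneg (B' - B)]
  have h4 := abs_sub (A' - A) (q * (B' - B))
  have h5 := abs_le.2 hA
  have h6 : ε₀ * (U / 2) ≤ ε₀ * (1 + B') := mul_le_mul_of_nonneg_left hB' he0.le
  have h7 : |A' - A - q * (B' - B)| ≤ |A' - A| + |q * (B' - B)| := by
    exact h4
  nlinarith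
end

section
/- Let K ≥ 1 be an integer, ν > 0, and let S be a nonempty finite set of at most K items, where item j has utility û_j ≥ 0 and a scalar feature x_j ∈ ℝ with |x_j| ≤ ν. Let U = max{1, max_{j∈S} û_j}, fix ε₀ ∈ (0, 1/2], and set Δ = ε₀·U/K. For each j ∈ S let μ_j = round(û_j/Δ)·Δ, α_j = round(û_j x_j/Δ)·Δ and β_j = round(û_j x_j²/Δ)·Δ, where round(x) denotes a nearest integer to x. Define CI(S) = sqrt( (Σ û_j x_j²)/(1+Σ û_j) − ((Σ û_j x_j)/(1+Σ û_j))² ) and CÎ(S) = sqrt( max{0, (Σ β_j)/(1+Σ μ_j) − ((Σ α_j)/(1+Σ μ_j))² } ), all sums over j ∈ S. Then |CI(S) − CÎ(S)| ≤ sqrt(24·ε₀)·(1 + ν). (Discretization error bound for the univariate confidence-width term; second part of Lemma 8 of the paper.) -/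
theorem aux_sqrt (p q t : ℝ) (ht : 0 ≤ t) (h : p ≤ q + t ^ 2) :
    Real.sqrt p ≤ Real.sqrt q + t := by
  have h0 := Real.sqrt_nonneg q
  have h1 : q ≤ Real.sqrt q ^ 2 := by
    rcases le_total 0 q with hq | hq
    · rw [Real.sq_sqrt hq]
    · exact hq.trans (sq_nonneg _)
  apply Real.sqrt_le_iff.2 ⟨by positivity, ?_⟩
  nlinarith [mul_nonneg h0 ht]

theorem aux_max (q : ℝ) : Real.sqrt (max 0 q) = Real.sqrt q := by
  rcases le_total 0 q with hq | hq
  · rw [max_eq_right hq]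
  · rw [max_eq_left hq, Real.sqrt_zero, Real.sqrt_eq_zero_of_nonpos hq]

theorem aux_round {ι : Type*} (S : Finset ι) (K : ℕ) (hSK : S.card ≤ K) (Δ : ℝ) (hΔ : 0 < Δ)
    (f g : ι → ℝ) (h : ∀ j ∈ S, g j = (round (f j / Δ) : ℝ) * Δ) :
    |∑ j ∈ S, g j - ∑ j ∈ S, f j| ≤ K * Δ / 2 := by
  rw [← Finset.sum_sub_distrib]
  refine (Finset.abs_sum_le_sum_abs _ _).trans ?_
  have h1 : ∀ j ∈ S, |g j - f j| ≤ Δ / 2 := by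
    intro j hj
    have h2 := abs_sub_round (f j / Δ)
    have h3 : g j - f j = -((f j / Δ - round (f j / Δ)) * Δ) := by
      rw [h j hj]; field_simp; ring
    rw [h3, abs_neg, abs_mul, abs_of_pos hΔ]
    nlinarith
  refine (Finset.sum_le_card_nsmul _ _ _ h1).trans ?_
  rw [nsmul_eq_mul]
  have : (S.card : ℝ) ≤ K := by exact_mod_cast hSK
  nlinarith

theorem aux_quot (A A' D D' ε M : ℝ) (hD : 0 < D) (hε : 0 < ε) (hε' : ε ≤ 1 / 2)
    (hA : |A| ≤ M * D) (hAA : |A' - A| ≤ ε * D / 2) (hDD : |D' - D| ≤ ε * D / 2) :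
    |A' / D' - A / D| ≤ 2 / 3 * ε * (1 + M) := by
  have hD' : 3 / 4 * D ≤ D' := by
    have := (abs_le.1 hDD).1
    nlinarith
  have hD'0 : 0 < D' := by linarith
  have hM : 0 ≤ M := by
    by_contra hM
    have := abs_nonneg A
    nlinarith
  have e : A' / D' - A / D = ((A' - A) * D - A * (D' - D)) / (D' * D) := by
    field_simp; ring
  rw [e, abs_div, abs_of_pos (mul_pos hD'0 hD), div_le_iff₀ (mul_pos hD'0 hD)]
  calc _ ≤ |(A' - A) * D| + |A * (D' - D)| := abs_sub _ _
    _ = |A' - A| * D + |A| * |D' - D| := by rw [abs_mul, abs_mul, abs_of_pos hD]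
    _ ≤ (ε * D / 2) * D + (M * D) * (ε * D / 2) := by gcongr
    _ = 2 / 3 * ε * (1 + M) * (3 / 4 * D * D) := by ring
    _ ≤ _ := by gcongr

/-- discretization error bound for the univariate confidence-width term
(second part of Lemma 8 of the paper). -/
theorem stmt8 {ι : Type*} (K : ℕ) (hK : 1 ≤ K) (ν : ℝ) (hν : 0 < ν)
    (S : Finset ι) (hS : S.Nonempty) (hSK : S.card ≤ K)
    (u x : ι → ℝ) (hu : ∀ j ∈ S, 0 ≤ u j) (hx : ∀ j ∈ S, |x j| ≤ ν)
    (ε₀ : ℝ) (hε₀ : ε₀ ∈ Set.Ioc (0 : ℝ) (1 / 2))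
    (U Δ : ℝ) (hU : U = max 1 (S.sup' hS u)) (hΔ : Δ = ε₀ * U / K)
    (μ α β : ι → ℝ)
    (hμ : ∀ j ∈ S, μ j = (round (u j / Δ) : ℝ) * Δ)
    (hα : ∀ j ∈ S, α j = (round (u j * x j / Δ) : ℝ) * Δ)
    (hβ : ∀ j ∈ S, β j = (round (u j * x j ^ 2 / Δ) : ℝ) * Δ) :
    |Real.sqrt ((∑ j ∈ S, u j * x j ^ 2) / (1 + ∑ j ∈ S, u j)
          - ((∑ j ∈ S, u j * x j) / (1 + ∑ j ∈ S, u j)) ^ 2)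
        - Real.sqrt (max 0 ((∑ j ∈ S, β j) / (1 + ∑ j ∈ S, μ j)
          - ((∑ j ∈ S, α j) / (1 + ∑ j ∈ S, μ j)) ^ 2))|
      ≤ Real.sqrt (24 * ε₀) * (1 + ν) := by
  obtain ⟨he, he'⟩ := hε₀
  have hK0 : (0 : ℝ) < K := by exact_mod_cast hK
  have hU1 : 1 ≤ U := hU ▸ le_max_left _ _
  have hΔ0 : 0 < Δ := by rw [hΔ]; positivity
  have hKΔ : K * Δ = ε₀ * U := by rw [hΔ]; field_simp
  have hsum : 0 ≤ ∑ j ∈ S, u j := Finset.sum_nonneg hu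
  have hUD : U ≤ 1 + ∑ j ∈ S, u j := by
    rw [hU]
    refine max_le (by linarith) (Finset.sup'_le _ _ fun j hj => ?_)
    have := Finset.single_le_sum hu hj
    linarith
  have bμ := aux_round S K hSK Δ hΔ0 u μ hμ
  have bα := aux_round S K hSK Δ hΔ0 (fun j => u j * x j) α hα
  have bβ := aux_round S K hSK Δ hΔ0 (fun j => u j * x j ^ 2) β hβ
  have bB : |∑ j ∈ S, u j * x j| ≤ ν * (1 + ∑ j ∈ S, u j) := by
    refine (Finset.abs_sum_le_sum_abs _ _).trans ?_
    have : ∑ j ∈ S, |u j * x j| ≤ ∑ j ∈ S, ν * u j := by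
      refine Finset.sum_le_sum fun j hj => ?_
      rw [abs_mul, abs_of_nonneg (hu j hj)]
      nlinarith [hu j hj, hx j hj]
    rw [← Finset.mul_sum] at this
    linarith
  have bA : |∑ j ∈ S, u j * x j ^ 2| ≤ ν ^ 2 * (1 + ∑ j ∈ S, u j) := by
    refine (Finset.abs_sum_le_sum_abs _ _).trans ?_
    have : ∑ j ∈ S, |u j * x j ^ 2| ≤ ∑ j ∈ S, ν ^ 2 * u j := by
      refine Finset.sum_le_sum fun j hj => ?_
      have h2 : x j ^ 2 ≤ ν ^ 2 := sq_le_sq' (abs_le.1 (hx j hj)).1 (abs_le.1 (hx j hj)).2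
      rw [abs_mul, abs_of_nonneg (hu j hj), abs_of_nonneg (sq_nonneg _)]
      nlinarith [hu j hj]
    rw [← Finset.mul_sum] at this
    nlinarith
  rw [aux_max]
  have hmu : 1 + ∑ j ∈ S, μ j - (1 + ∑ j ∈ S, u j) = ∑ j ∈ S, μ j - ∑ j ∈ S, u j := by ring
  rw [← hmu] at bμ
  generalize 1 + ∑ j ∈ S, u j = D at *
  generalize 1 + ∑ j ∈ S, μ j = D' at *
  generalize ∑ j ∈ S, u j * x j ^ 2 = A at *
  generalize ∑ j ∈ S, u j * x j = B at *
  generalize ∑ j ∈ S, β j = A' at *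
  generalize ∑ j ∈ S, α j = B' at *
  have hD : 0 < D := by linarith
  have hle : K * Δ / 2 ≤ ε₀ * D / 2 := by rw [hKΔ]; gcongr
  have q1 := aux_quot A A' D D' ε₀ _ hD he he' bA (bβ.trans hle) (bμ.trans hle)
  have q2 := aux_quot B B' D D' ε₀ _ hD he he' bB (bα.trans hle) (bμ.trans hle)
  have q3 : |B / D| ≤ ν := by
    rw [abs_div, abs_of_pos hD, div_le_iff₀ hD]; exact bB
  generalize A / D = a at *
  generalize A' / D' = a' at *
  generalize B / D = b at *
  generalize B' / D' = b' at *
  have q4 : |b' + b| ≤ 7 / 3 * (1 + ν) := by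
    have : b' + b = (b' - b) + 2 * b := by ring
    rw [this]
    refine (abs_add_le _ _).trans ?_
    rw [abs_mul, abs_two]
    nlinarith
  have q5 : |b' ^ 2 - b ^ 2| ≤ (2 / 3 * ε₀ * (1 + ν)) * (7 / 3 * (1 + ν)) := by
    have : b' ^ 2 - b ^ 2 = (b' - b) * (b' + b) := by ring
    rw [this, abs_mul]
    gcongr
  have ht : (Real.sqrt (24 * ε₀) * (1 + ν)) ^ 2 = 24 * (ε₀ * (1 + ν) ^ 2) := by
    rw [mul_pow, Real.sq_sqrt (by positivity)]; ring
  have q6 : ε₀ * (1 + ν ^ 2) ≤ ε₀ * (1 + ν) ^ 2 := by gcongr; nlinarith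
  have q7 : 0 ≤ ε₀ * (1 + ν) ^ 2 := by positivity
  have ht0 : 0 ≤ Real.sqrt (24 * ε₀) * (1 + ν) := by positivity
  rw [abs_le] at q1 q5
  have r1 := aux_sqrt (a - b ^ 2) (a' - b' ^ 2) _ ht0 (by rw [ht]; linarith [q1.1, q1.2, q5.1, q5.2])
  have r2 := aux_sqrt (a' - b' ^ 2) (a - b ^ 2) _ ht0 (by rw [ht]; linarith [q1.1, q1.2, q5.1, q5.2])
  rw [abs_le]
  constructor <;> linarith
end

section
/- Let A, B, τ₁, τ₂ be real numbers with 0 ≤ A ≤ B and |τ₂| < B. Then | A/B − (A + τ₁)/(B + τ₂) | ≤ (|τ₁| + 2|τ₂|) / (B − |τ₂|). (Perturbation bound for ratios; the key algebraic step in the proof of Lemma 8 of the paper.) -/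
/-- perturbation bound for ratios. -/
theorem stmt9 (A B τ₁ τ₂ : ℝ) (hA : 0 ≤ A) (hAB : A ≤ B) (hτ₂ : |τ₂| < B) :
    |A / B - (A + τ₁) / (B + τ₂)| ≤ (|τ₁| + 2 * |τ₂|) / (B - |τ₂|) := by
  have hB : 0 < B := lt_of_le_of_lt (abs_nonneg _) hτ₂
  have hn := neg_abs_le τ₂
  have hB2 : 0 < B + τ₂ := by linarith
  have hr0 : 0 ≤ A / B := div_nonneg hA hB.le
  have hr1 : A / B ≤ 1 := (div_le_one hB).2 hAB
  have e : A / B - (A + τ₁) / (B + τ₂) = (A / B * τ₂ - τ₁) / (B + τ₂) := by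
    have h1 := hB.ne'
    have h2 := hB2.ne'
    field_simp
    ring
  rw [e, abs_div, abs_of_pos hB2]
  have h3 : |A / B * τ₂ - τ₁| ≤ |τ₁| + 2 * |τ₂| := by
    have h4 := abs_sub (A / B * τ₂) τ₁
    have h5 : |A / B * τ₂| ≤ |τ₂| := by
      rw [abs_mul, abs_of_nonneg hr0]
      exact mul_le_of_le_one_left (abs_nonneg _) hr1
    linarith [abs_nonneg τ₂]
  exact div_le_div₀ (by positivity) h3 (by linarith) (by linarith)
end

section
/- Let N ≥ 1 and K ≥ 1 be integers. Fix utilities u_i ≥ 0 and revenues r_i ∈ [0,1] for i ∈ {1,…,N}, and define ESTR(S) = (Σ_{i∈S} u_i r_i)/(1 + Σ_{i∈S} u_i) for S ⊆ {1,…,N}. Suppose S ⊆ {1,…,N} with |S| ≤ K satisfies all of: (a) ESTR((S ∪ {i}) \ {j}) ≤ ESTR(S) for every i ∉ S and j ∈ S; (b) if |S| < K, then ESTR(S ∪ {i}) ≤ ESTR(S) for every i ∉ S; (c) ESTR(S \ {j}) ≤ ESTR(S) for every j ∈ S. Then ESTR(S') ≤ ESTR(S) for every S' ⊆ {1,…,N}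 with |S'| ≤ K. (Correctness of the greedy swapping heuristic when ω = 0: any assortment that cannot be improved by a single swap, addition, or deletion is a global maximizer of ESTR; this is the optimality claim in Proposition 2 of the paper.) -/
/-- correctness of the greedy swapping heuristic when ω = 0
(Proposition 2 of the paper): any assortment of size ≤ K that cannot be improved by a
single swap, addition, or deletion is a global maximizer of ESTR among assortments of
size ≤ K. -/
theorem stmt10 (N K : ℕ) (hN : 1 ≤ N) (hK : 1 ≤ K)
    (u r : Fin N → ℝ) (hu : ∀ i, 0 ≤ u i) (hr : ∀ i, r i ∈ Set.Icc (0 : ℝ) 1)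
    (ESTR : Finset (Fin N) → ℝ)
    (hESTR : ∀ S, ESTR S = (∑ i ∈ S, u i * r i) / (1 + ∑ i ∈ S, u i))
    (S : Finset (Fin N)) (hSK : S.card ≤ K)
    (hswap : ∀ i ∉ S, ∀ j ∈ S, ESTR (insert i (S.erase j)) ≤ ESTR S)
    (hadd : S.card < K → ∀ i ∉ S, ESTR (insert i S) ≤ ESTR S)
    (hdel : ∀ j ∈ S, ESTR (S.erase j) ≤ ESTR S) :
    ∀ S' : Finset (Fin N), S'.card ≤ K → ESTR S' ≤ ESTR S := by
  have key : ∀ (t : ℝ) (A : Finset (Fin N)), ESTR A ≤ t ↔ ∑ i ∈ A, u i * (r i - t) ≤ t := by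
    intro t A
    have hpos : 0 < 1 + ∑ i ∈ A, u i := by
      have := Finset.sum_nonneg (fun i (_ : i ∈ A) => hu i)
      linarith
    rw [hESTR, div_le_iff₀ hpos]
    simp only [mul_sub, Finset.sum_sub_distrib, ← Finset.sum_mul]
    constructor <;> intro h <;> linarith
  have hS : ∑ i ∈ S, u i * (r i - ESTR S) = ESTR S := by
    have hpos : 0 < 1 + ∑ i ∈ S, u i := by
      have := Finset.sum_nonneg (fun i (_ : i ∈ S) => hu i)
      linarith
    have h := hESTR S
    rw [eq_div_iff hpos.ne'] at h
    simp only [mul_sub, Finset.sum_sub_distrib, ← Finset.sum_mul]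
    linarith
  intro S' hS'
  generalize ESTR S = t at *
  rw [key]
  simp only [key] at hswap hadd hdel
  set w : Fin N → ℝ := fun i => u i * (r i - t) with hw
  change ∑ i ∈ S, w i = t at hS
  change ∑ i ∈ S', w i ≤ t
  have hd : ∀ j ∈ S, 0 ≤ w j := by
    intro j hj
    have h1 : ∑ i ∈ S.erase j, w i ≤ t := hdel j hj
    have h2 := Finset.sum_erase_add S w hj
    linarith
  have hs : ∀ i ∉ S, ∀ j ∈ S, w i ≤ w j := by
    intro i hi j hj
    have h1 : ∑ i ∈ insert i (S.erase j), w i ≤ t := hswap i hi j hj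
    rw [Finset.sum_insert (fun h => hi (Finset.mem_of_mem_erase h))] at h1
    have h2 := Finset.sum_erase_add S w hj
    linarith
  have e1 := Finset.sum_inter_add_sum_sdiff S S' w
  have e2 := Finset.sum_inter_add_sum_sdiff S' S w
  rw [Finset.inter_comm] at e2
  suffices h : ∑ i ∈ S' \ S, w i ≤ ∑ i ∈ S \ S', w i by linarith
  have hnn : 0 ≤ ∑ i ∈ S \ S', w i :=
    Finset.sum_nonneg (fun i hi => hd i (Finset.mem_sdiff.1 hi).1)
  rcases hSK.lt_or_eq with hlt | heq
  · refine le_trans (Finset.sum_nonpos fun i hi => ?_) hnn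
    have hi' := (Finset.mem_sdiff.1 hi).2
    have h1 : ∑ i ∈ insert i S, w i ≤ t := hadd hlt i hi'
    rw [Finset.sum_insert hi'] at h1
    linarith
  · have hc : (S' \ S).card ≤ (S \ S').card := by
      have h1 := Finset.card_inter_add_card_sdiff S S'
      have h2 := Finset.card_inter_add_card_sdiff S' S
      rw [Finset.inter_comm] at h2
      omega
    rcases (S \ S').eq_empty_or_nonempty with he | hne
    · rw [he, Finset.card_empty] at hc
      rw [he, Finset.card_eq_zero.1 (Nat.le_zero.1 hc)]
    · obtain ⟨m, hm, hmin⟩ := Finset.exists_min_image _ w hne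
      have hmS := (Finset.mem_sdiff.1 hm).1
      have a1 := Finset.sum_le_card_nsmul (S' \ S) w (w m)
        (fun i hi => hs i (Finset.mem_sdiff.1 hi).2 m hmS)
      have a2 := Finset.card_nsmul_le_sum (S \ S') w (w m) hmin
      exact a1.trans ((nsmul_le_nsmul_left (hd m hmS) hc).trans a2)
end

section
/- Let N, K ≥ 1 and d ≥ 1 be integers, and fix utilities û_j > 0, revenues r_j ∈ [0,1] and feature vectors x_j ∈ ℝ^d for j ∈ {1,…,N}. For S ⊆ {1,…,N} define ESTR(S) = (Σ_{j∈S} û_j r_j)/(1+Σ_{j∈S} û_j), M_S = (Σ_{j∈S} û_j x_j x_jᵀ)/(1+Σ_{j∈S} û_j) − ((Σ_{j∈S} û_j x_j)/(1+Σ_{j∈S} û_j))((Σ_{j∈S} û_j x_j)/(1+Σ_{j∈S} û_j))ᵀ, CI(S) = sqrt(‖M_S‖_op), and for a unit vector y ∈ ℝ^d, CI^y(S) = sqrt(max{0, yᵀ M_S y}). Let ω ≥ 0, ε ≥ 0, α ≥ 1, let S* maximize ESTR(S) + min{1, ω·CI(S)} over all S with |S| ≤ K, and let y* be a unit eigenvector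 of M_{S*} for its largest eigenvalue. Suppose y is a unit vector with ⟨y, y*⟩ ≥ 1/α, and Ŝ with |Ŝ| ≤ K satisfies ESTR(Ŝ) + min{1, α·ω·CI^y(Ŝ)} + ε ≥ ESTR(S) + min{1, α·ω·CI^y(S)} for every S with |S| ≤ K. Then ESTR(Ŝ) + min{1, α·ω·CI(Ŝ)} + ε ≥ ESTR(S*) + min{1, ω·CI(S*)}. (Lemma A.1 of the paper: a good random direction turns a univariate approximate maximizer into an (α, ε)-approximate maximizer of the multivariate objective.) -/
open scoped Matrix in
theorem aux_upper {d : ℕ} (M : Matrix (Fin d) (Fin d) ℝ) (y : Fin d → ℝ) (hy : y ⬝ᵥ y = 1) :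
    y ⬝ᵥ M.mulVec y ≤ l2OpNorm M := by
  have hn : ‖WithLp.toLp 2 y‖ = 1 := by
    have h : ‖WithLp.toLp 2 y‖ ^ 2 = 1 := by
      rw [← real_inner_self_eq_norm_sq, EuclideanSpace.inner_toLp_toLp]
      simpa using hy
    have := norm_nonneg (WithLp.toLp 2 y)
    nlinarith
  have h1 : y ⬝ᵥ M.mulVec y
      = inner ℝ (WithLp.toLp 2 y) (Matrix.toEuclideanCLM (𝕜 := ℝ) M (WithLp.toLp 2 y)) := by
    rw [Matrix.toEuclideanCLM_toLp, EuclideanSpace.inner_toLp_toLp]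
    simp [dotProduct_comm]
  rw [h1]
  refine (real_inner_le_norm _ _).trans ?_
  have h2 := (Matrix.toEuclideanCLM (𝕜 := ℝ) M).le_opNorm (WithLp.toLp 2 y)
  rw [hn] at h2 ⊢
  unfold l2OpNorm
  linarith

open scoped Matrix in
theorem aux_bil {N d : ℕ} (u : Fin N → ℝ) (x : Fin N → Fin d → ℝ) (S : Finset (Fin N)) (W : ℝ)
    (v w : Fin d → ℝ) :
    v ⬝ᵥ (W⁻¹ • (∑ j ∈ S, u j • Matrix.vecMulVec (x j) (x j))
          - Matrix.vecMulVec (W⁻¹ • ∑ j ∈ S, u j • x j) (W⁻¹ • ∑ j ∈ S, u j • x j)).mulVec w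
      = W⁻¹ * (∑ j ∈ S, u j * ((x j ⬝ᵥ v) * (x j ⬝ᵥ w)))
        - (W⁻¹ * ∑ j ∈ S, u j * (x j ⬝ᵥ v)) * (W⁻¹ * ∑ j ∈ S, u j * (x j ⬝ᵥ w)) := by
  simp only [Matrix.sub_mulVec, Matrix.smul_mulVec, Matrix.sum_mulVec, Matrix.vecMulVec_mulVec,
    dotProduct_sub, dotProduct_smul, dotProduct_sum, sum_dotProduct, smul_dotProduct, smul_eq_mul,
    op_smul_eq_smul]
  simp only [dotProduct_comm v]
  congr 1
  · congr 1
    exact Finset.sum_congr rfl fun j _ => by ring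
  · ring

theorem aux_psd {N : ℕ} (u a : Fin N → ℝ) (hu : ∀ j, 0 < u j) (S : Finset (Fin N)) :
    0 ≤ (1 + ∑ j ∈ S, u j)⁻¹ * (∑ j ∈ S, u j * (a j * a j))
        - ((1 + ∑ j ∈ S, u j)⁻¹ * ∑ j ∈ S, u j * a j) *
          ((1 + ∑ j ∈ S, u j)⁻¹ * ∑ j ∈ S, u j * a j) := by
  have hU : 0 ≤ ∑ j ∈ S, u j := Finset.sum_nonneg fun j _ => (hu j).le
  have hA : 0 ≤ ∑ j ∈ S, u j * (a j * a j) :=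
    Finset.sum_nonneg fun j _ => mul_nonneg (hu j).le (mul_self_nonneg _)
  have hcs : (∑ j ∈ S, u j * a j) ^ 2 ≤ (∑ j ∈ S, u j) * ∑ j ∈ S, u j * (a j * a j) :=
    Finset.sum_sq_le_sum_mul_sum_of_sq_le_mul S (fun j _ => (hu j).le)
      (fun j _ => mul_nonneg (hu j).le (mul_self_nonneg _)) (fun j _ => le_of_eq (by ring))
  generalize (∑ j ∈ S, u j) = U at *
  generalize (∑ j ∈ S, u j * (a j * a j)) = A at *
  generalize (∑ j ∈ S, u j * a j) = B at *
  have hW : 0 < 1 + U := by linarith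
  have : (1 + U)⁻¹ * A - ((1 + U)⁻¹ * B) * ((1 + U)⁻¹ * B)
      = ((1 + U) * A - B ^ 2) / (1 + U) ^ 2 := by
    field_simp
  rw [this]
  apply div_nonneg _ (by positivity)
  nlinarith

open scoped Matrix in
/-- Lemma A.1 of the paper: a good random direction turns a univariate
approximate maximizer into an (α, ε)-approximate maximizer of the multivariate
objective.  Since `Mmat S*` is positive semidefinite, its largest eigenvalue equals its
operator norm, so `y*` being a unit top eigenvector is expressed by the eigenvalue
equation with eigenvalue `l2OpNorm (Mmat S*)`. -/
theorem stmt11 (N K d : ℕ) (hN : 1 ≤ N) (hK : 1 ≤ K) (hd : 1 ≤ d)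
    (u r : Fin N → ℝ) (x : Fin N → Fin d → ℝ)
    (hu : ∀ j, 0 < u j) (hr : ∀ j, r j ∈ Set.Icc (0 : ℝ) 1)
    (ESTR : Finset (Fin N) → ℝ)
    (hESTR : ∀ S, ESTR S = (∑ j ∈ S, u j * r j) / (1 + ∑ j ∈ S, u j))
    (Mmat : Finset (Fin N) → Matrix (Fin d) (Fin d) ℝ)
    (hM : ∀ S, Mmat S =
        (1 + ∑ j ∈ S, u j)⁻¹ • (∑ j ∈ S, u j • Matrix.vecMulVec (x j) (x j))
          - Matrix.vecMulVec ((1 + ∑ j ∈ S, u j)⁻¹ • ∑ j ∈ S, u j • x j)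
              ((1 + ∑ j ∈ S, u j)⁻¹ • ∑ j ∈ S, u j • x j))
    (CI : Finset (Fin N) → ℝ) (hCI : ∀ S, CI S = Real.sqrt (l2OpNorm (Mmat S)))
    (CIy : (Fin d → ℝ) → Finset (Fin N) → ℝ)
    (hCIy : ∀ y S, CIy y S = Real.sqrt (max 0 (y ⬝ᵥ (Mmat S).mulVec y)))
    (ω ε α : ℝ) (hω : 0 ≤ ω) (hε : 0 ≤ ε) (hα : 1 ≤ α)
    (Sstar : Finset (Fin N)) (hSstarK : Sstar.card ≤ K)
    (hSstarOpt : ∀ S : Finset (Fin N), S.card ≤ K →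
      ESTR S + min 1 (ω * CI S) ≤ ESTR Sstar + min 1 (ω * CI Sstar))
    (ystar : Fin d → ℝ) (hystar : ystar ⬝ᵥ ystar = 1)
    (heig : (Mmat Sstar).mulVec ystar = l2OpNorm (Mmat Sstar) • ystar)
    (y : Fin d → ℝ) (hy : y ⬝ᵥ y = 1) (hyy : 1 / α ≤ y ⬝ᵥ ystar)
    (Shat : Finset (Fin N)) (hShatK : Shat.card ≤ K)
    (hShat : ∀ S : Finset (Fin N), S.card ≤ K →
      ESTR S + min 1 (α * ω * CIy y S) ≤ ESTR Shat + min 1 (α * ω * CIy y Shat) + ε) :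
    ESTR Sstar + min 1 (ω * CI Sstar) ≤ ESTR Shat + min 1 (α * ω * CI Shat) + ε := by
  have hsym : ∀ S v w, v ⬝ᵥ (Mmat S).mulVec w = w ⬝ᵥ (Mmat S).mulVec v := by
    intro S v w
    rw [hM, aux_bil, aux_bil, mul_comm (_ * ∑ j ∈ S, u j * (x j ⬝ᵥ v))]
    simp only [mul_comm (x _ ⬝ᵥ v) (x _ ⬝ᵥ w)]
  have hpsd : ∀ S v, 0 ≤ v ⬝ᵥ (Mmat S).mulVec v := by
    intro S v
    rw [hM, aux_bil]
    exact aux_psd u (fun j => x j ⬝ᵥ v) hu S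
  have hα0 : 0 < α := by linarith
  have hl : 0 ≤ l2OpNorm (Mmat Sstar) := norm_nonneg _
  set l := l2OpNorm (Mmat Sstar) with hldef
  set c := y ⬝ᵥ ystar with hc
  have hlow : c ^ 2 * l ≤ y ⬝ᵥ (Mmat Sstar).mulVec y := by
    have h := hpsd Sstar (y - c • ystar)
    rw [Matrix.mulVec_sub, Matrix.mulVec_smul, sub_dotProduct, dotProduct_sub, dotProduct_sub,
      smul_dotProduct, smul_dotProduct, hsym Sstar ystar y, heig] at h
    simp only [dotProduct_smul, smul_eq_mul, hystar, ← hc] at h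
    nlinarith
  have hαc : 1 ≤ α * c := by
    rw [div_le_iff₀ hα0] at hyy
    linarith
  have h1 : CI Sstar ≤ α * CIy y Sstar := by
    rw [hCI, hCIy, max_eq_right (hpsd _ _)]
    apply Real.sqrt_le_iff.2
    refine ⟨by positivity, ?_⟩
    rw [mul_pow, Real.sq_sqrt (hpsd _ _)]
    have h3 : 1 ≤ (α * c) ^ 2 := one_le_pow₀ hαc
    have h4 := mul_le_mul_of_nonneg_left hlow (sq_nonneg α)
    have h5 := mul_le_mul_of_nonneg_right h3 hl
    nlinarith
  have h2 : CIy y Shat ≤ CI Shat := by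
    rw [hCI, hCIy, max_eq_right (hpsd _ _)]
    exact Real.sqrt_le_sqrt (aux_upper _ _ hy)
  have h3 : min 1 (ω * CI Sstar) ≤ min 1 (α * ω * CIy y Sstar) := by
    apply min_le_min_left
    have := mul_le_mul_of_nonneg_left h1 hω
    linarith
  have h4 : min 1 (α * ω * CIy y Shat) ≤ min 1 (α * ω * CI Shat) := by
    apply min_le_min_left
    exact mul_le_mul_of_nonneg_left h2 (by positivity)
  have h5 := hShat Sstar hSstarK
  linarith
end
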